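/- The one-step rewrite relation → of the name algebra is locally confluent: for all terms a, b, c, if a → b and a → c, then there exists a term d such that b →* d and c →* d. -/

import Mathlib

/-- Terms of the name algebra over atoms in ℕ. -/
inductive Term : Type
  | var : ℕ → Term
  | projL : Term → Term
  | projR : Term → Term
  | join : Term → Term → Term
deriving DecidableEq

/-- One-step rewrite relation: the three rules `(u ∧ v).l → u`, `(u ∧ v).r → v`,
`(u.l ∧ u.r) → u`, closed under all term contexts. -/
inductive Step : Term → Term → Prop
  | splitL (u v : Term) : Step (Term.projL (Term.join u v)) u
  | splitR (u v : Term) : Step (Term.projR (Term.join u v)) v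
  | merge (u : Term) : Step (Term.join (Term.projL u) (Term.projR u)) u
  | congL {a b : Term} : Step a b → Step (Term.projL a) (Term.projL b)
  | congR {a b : Term} : Step a b → Step (Term.projR a) (Term.projR b)
  | congJoinL {a b : Term} (v : Term) : Step a b → Step (Term.join a v) (Term.join b v)
  | congJoinR {a b : Term} (u : Term) : Step a b → Step (Term.join u a) (Term.join u b)

/-- Reflexive-transitive closure of `Step`. -/
def Steps : Term → Term → Prop := Relation.ReflTransGen Step

/-- A term is in normal form if no rewrite step applies to it. -/
def NormalForm (n : Term) : Prop := ¬ ∃ m, Step n m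

/-- `u ≈ v` : the normal forms of `u` and `v` coincide, i.e. they reach a common normal form. -/
def TermEquiv (u v : Term) : Prop := ∃ n, NormalForm n ∧ Steps u n ∧ Steps v n

theorem joinable_splitL {u v c : Term} (h : Step (Term.projL (Term.join u v)) c) :
    ∃ d, Steps u d ∧ Steps c d := by
  cases h with
  | splitL => exact ⟨_, .refl, .refl⟩
  | congL h =>
    cases h with
    | merge => exact ⟨_, .refl, .refl⟩
    | congJoinL _ h => exact ⟨_, .single h, .single (.splitL _ _)⟩
    | congJoinR _ h => exact ⟨_, .refl, .single (.splitL _ _)⟩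

theorem joinable_splitR {u v c : Term} (h : Step (Term.projR (Term.join u v)) c) :
    ∃ d, Steps v d ∧ Steps c d := by
  cases h with
  | splitR => exact ⟨_, .refl, .refl⟩
  | congR h =>
    cases h with
    | merge => exact ⟨_, .refl, .refl⟩
    | congJoinL _ h => exact ⟨_, .refl, .single (.splitR _ _)⟩
    | congJoinR _ h => exact ⟨_, .single h, .single (.splitR _ _)⟩

theorem joinable_merge {u c : Term} (h : Step (Term.join (Term.projL u) (Term.projR u)) c) :
    ∃ d, Steps u d ∧ Steps c d := by
  cases h with
  | merge => exact ⟨_, .refl, .refl⟩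
  | congJoinL _ h =>
    cases h with
    | splitL => exact ⟨_, .refl, .single (.congJoinR _ (.splitR _ _))⟩
    | congL h =>
      exact ⟨_, .single h, .tail (.single (.congJoinR _ (.congR h))) (.merge _)⟩
  | congJoinR _ h =>
    cases h with
    | splitR => exact ⟨_, .refl, .single (.congJoinL _ (.splitL _ _))⟩
    | congR h =>
      exact ⟨_, .single h, .tail (.single (.congJoinL _ (.congL h))) (.merge _)⟩

theorem joinable_symm {b c : Term} (h : ∃ d, Steps b d ∧ Steps c d) :
    ∃ d, Steps c d ∧ Steps b d := by
  obtain ⟨d, h1, h2⟩ := h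
  exact ⟨d, h2, h1⟩

theorem joinable_lift (f : Term → Term) (hf : ∀ x y, Step x y → Step (f x) (f y)) {b c : Term}
    (h : ∃ d, Steps b d ∧ Steps c d) : ∃ d, Steps (f b) d ∧ Steps (f c) d := by
  obtain ⟨d, h1, h2⟩ := h
  exact ⟨f d, Relation.ReflTransGen.lift f hf _ _ h1, Relation.ReflTransGen.lift f hf _ _ h2⟩

/-- The rewrite relation of the name algebra is locally confluent. -/
theorem step_locally_confluent :
    ∀ a b c : Term, Step a b → Step a c → ∃ d, Steps b d ∧ Steps c d := by
  intro a b c h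
  induction h generalizing c with
  | splitL u v => exact joinable_splitL
  | splitR u v => exact joinable_splitR
  | merge u => exact joinable_merge
  | congL h ih =>
    intro h'
    cases h' with
    | splitL => exact joinable_symm (joinable_splitL (.congL h))
    | congL h' => exact joinable_lift Term.projL (fun _ _ => .congL) (ih _ h')
  | congR h ih =>
    intro h'
    cases h' with
    | splitR => exact joinable_symm (joinable_splitR (.congR h))
    | congR h' => exact joinable_lift Term.projR (fun _ _ => .congR) (ih _ h')
  | congJoinL v h ih =>
    intro h'
    cases h' with
    | merge => exact joinable_symm (joinable_merge (.congJoinL _ h))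
    | congJoinL _ h' =>
      exact joinable_lift (fun x => Term.join x v) (fun _ _ => .congJoinL v) (ih _ h')
    | congJoinR _ h' => exact ⟨_, .single (.congJoinR _ h'), .single (.congJoinL _ h)⟩
  | congJoinR u h ih =>
    intro h'
    cases h' with
    | merge => exact joinable_symm (joinable_merge (.congJoinR _ h))
    | congJoinL _ h' => exact ⟨_, .single (.congJoinL _ h'), .single (.congJoinR _ h)⟩
    | congJoinR _ h' =>
      exact joinable_lift (fun x => Term.join u x) (fun _ _ => .congJoinR u) (ih _ h')
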